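/- arXiv:2106.05761 — 12 statements merged into one kernel-verified Lean document; each statement's English description precedes it below -/
import Mathlib

section
/- Let U and R be finite sets with |R| = k ≥ 2, let C be a finite set of weighted constraints on U × R each of one of the six standard forms (SoD_U, BoD_U, SoD_E, BoD_E, Card_UB, Card_LB), and let τ ≥ 1 be an integer such that τ ≥ t_c for every Card_LB constraint in C. Then for every complete authorization relation A ⊆ U × R there exists a complete authorization relation A* ⊆ A such that at most 3τ·(k choose 2) users are authorized by A* for at least one resource (i.e., |{u ∈ U : A*(u) ≠ ∅}| ≤ 3τ·(k choose 2)) and w_C(A*) ≤ w_C(A). -/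
open Finset

namespace APEP

variable {U R : Type*} [Fintype U] [Fintype R] [DecidableEq U] [DecidableEq R]

/-- The set of users authorized for resource `r` by `A`. -/
def ares (A : Finset (U × R)) (r : R) : Finset U := univ.filter (fun u => (u, r) ∈ A)

/-- The set of resources for which user `u` is authorized by `A`. -/
def ausr (A : Finset (U × R)) (u : U) : Finset R := univ.filter (fun r => (u, r) ∈ A)

/-- An authorization relation is complete if every resource has an authorized user. -/
def Complete (A : Finset (U × R)) : Prop := ∀ r : R, (ares A r).Nonempty

/-- `f : ℤ → ℕ` is monotonically increasing with `f z = 0` iff `z ≤ 0`. -/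
def MonoIncZero (f : ℤ → ℕ) : Prop := Monotone f ∧ ∀ z : ℤ, f z = 0 ↔ z ≤ 0

def IsSoDU (w : Finset (U × R) → ℕ) : Prop :=
  ∃ (r r' : R) (f : ℤ → ℕ), MonoIncZero f ∧
    ∀ A, w A = f (((ares A r) ∩ (ares A r')).card)

def IsBoDU (w : Finset (U × R) → ℕ) : Prop :=
  ∃ (r r' : R) (f : ℤ → ℕ), MonoIncZero f ∧
    ∀ A, w A = f (max ((ares A r \ ares A r').card) ((ares A r' \ ares A r).card))

def IsSoDE (w : Finset (U × R) → ℕ) : Prop :=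
  ∃ (r r' : R) (ℓ : ℕ), 0 < ℓ ∧
    ∀ A, w A = if ares A r ≠ ares A r' then 0 else ℓ

def IsBoDE (w : Finset (U × R) → ℕ) : Prop :=
  ∃ (r r' : R) (ℓ : ℕ), 0 < ℓ ∧
    ∀ A, w A = if ((ares A r) ∩ (ares A r')).Nonempty then 0 else ℓ

def IsCardUB (w : Finset (U × R) → ℕ) : Prop :=
  ∃ (r : R) (t : ℕ) (f : ℤ → ℕ), MonoIncZero f ∧
    ∀ A, w A = f (((ares A r).card : ℤ) - (t : ℤ))

/-- A Card_LB constraint with lower-bound parameter `t`. -/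
def IsCardLB (w : Finset (U × R) → ℕ) (t : ℕ) : Prop :=
  ∃ (r : R) (f : ℤ → ℕ), MonoIncZero f ∧
    ∀ A, w A = f ((t : ℤ) - ((ares A r).card : ℤ))

theorem exists_keep (A : Finset (U × R)) (τ : ℕ) :
    ∃ V : Finset U, V.card ≤ 3 * τ * (Fintype.card R).choose 2 ∧
      ∀ P : Finset R, P.card = 2 → ∀ X ⊆ P, X.Nonempty →
        ∃ T ⊆ V, T ⊆ univ.filter (fun u => ausr A u ∩ P = X) ∧
          T.card = min τ (univ.filter (fun u => ausr A u ∩ P = X)).card := by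
  have hp : ∀ S : Finset U, ∃ T ⊆ S, T.card = min τ S.card := fun S =>
    Finset.exists_subset_card_eq (min_le_right _ _)
  choose pick h1 h2 using hp
  refine ⟨(powersetCard 2 (univ : Finset R)).biUnion (fun P =>
    (P.powerset.erase ∅).biUnion (fun X => pick (univ.filter (fun u => ausr A u ∩ P = X)))),
    ?_, ?_⟩
  · refine (card_biUnion_le_card_mul _ _ (3 * τ) ?_).trans ?_
    · intro P hP
      have hc := (mem_powersetCard.1 hP).2
      refine (card_biUnion_le_card_mul _ _ τ ?_).trans ?_
      · intro X _
        rw [h2]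
        exact min_le_left _ _
      · rw [card_erase_of_mem (by simp), card_powerset, hc]
        norm_num
    · rw [card_powersetCard, card_univ, mul_comm]
  · intro P hP X hX hne
    refine ⟨_, ?_, h1 _, h2 _⟩
    intro u hu
    rw [mem_biUnion]
    refine ⟨P, by simp [mem_powersetCard, hP], ?_⟩
    rw [mem_biUnion]
    exact ⟨X, by simp [hX, hne.ne_empty], hu⟩

theorem mem_ares {A : Finset (U × R)} {u : U} {r : R} : u ∈ ares A r ↔ (u, r) ∈ A := by
  simp [ares]

theorem mem_ausr {A : Finset (U × R)} {u : U} {r : R} : r ∈ ausr A u ↔ (u, r) ∈ A := by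
  simp [ausr]

theorem small_witness_bound {ι : Type*} [Fintype ι]
    (w : ι → Finset (U × R) → ℕ) (k τ : ℕ)
    (hk : k = Fintype.card R) (hk2 : 2 ≤ k) (hτ : 1 ≤ τ)
    (hforms : ∀ i, IsSoDU (w i) ∨ IsBoDU (w i) ∨ IsSoDE (w i) ∨ IsBoDE (w i) ∨
      IsCardUB (w i) ∨ ∃ t ≤ τ, IsCardLB (w i) t)
    (A : Finset (U × R)) (hA : Complete A) :
    ∃ Astar ⊆ A, Complete Astar ∧
      (univ.filter (fun u => (ausr Astar u).Nonempty)).card ≤ 3 * τ * k.choose 2 ∧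
      (∑ i, w i Astar) ≤ ∑ i, w i A := by
  subst hk
  obtain ⟨V, hVc, hV⟩ := exists_keep A τ
  have hres : ∀ r, ares (A.filter (fun p => p.1 ∈ V)) r = ares A r ∩ V := by
    intro r
    ext u
    simp [mem_ares]
  -- every nonempty class is hit
  have hhit : ∀ (r r' : R), r ≠ r' → ∀ X ⊆ ({r, r'} : Finset R), X.Nonempty →
      ∀ u, ausr A u ∩ {r, r'} = X → ∃ v ∈ V, ausr A v ∩ {r, r'} = X := by
    intro r r' hne X hX hXne u hu
    obtain ⟨T, hTV, hT, hc⟩ := hV {r, r'} (card_pair hne) X hX hXne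
    have hpos : 0 < (univ.filter (fun u => ausr A u ∩ {r, r'} = X)).card :=
      card_pos.2 ⟨u, by simpa using hu⟩
    have hT0 : 0 < T.card := by omega
    obtain ⟨v, hv⟩ := card_pos.1 hT0
    exact ⟨v, hTV hv, by simpa using hT hv⟩
  have hcard : ∀ r, ares A r ∩ V = ares A r ∨ τ ≤ (ares A r ∩ V).card := by
    intro r
    by_contra! hcon
    obtain ⟨h1, h2⟩ := hcon
    apply h1
    apply inter_eq_left.2
    intro u hu
    obtain ⟨r', hr'⟩ := Fintype.exists_ne_of_one_lt_card (by omega : 1 < Fintype.card R) r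
    have hr : r ∈ ausr A u ∩ {r, r'} := by
      simpa [mem_ausr, mem_ares] using hu
    obtain ⟨T, hTV, hT, hc⟩ := hV {r, r'} (card_pair hr'.symm) (ausr A u ∩ {r, r'})
      inter_subset_right ⟨r, hr⟩
    have hTA : T ⊆ ares A r ∩ V := by
      intro v hv
      refine mem_inter.2 ⟨?_, hTV hv⟩
      have := hT hv
      simp only [mem_filter, mem_univ, true_and] at this
      rw [← this] at hr
      exact mem_ares.2 (mem_ausr.1 (mem_inter.1 hr).1)
    have hle := card_le_card hTA
    have hTe := eq_of_subset_of_card_le hT (by omega)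
    apply hTV
    rw [hTe]
    simp
  have hcomp : Complete (A.filter (fun p => p.1 ∈ V)) := by
    intro r
    rw [hres]
    rcases hcard r with h | h
    · rw [h]
      exact hA r
    · exact card_pos.1 (by omega)
  refine ⟨A.filter (fun p => p.1 ∈ V), filter_subset _ _, hcomp, ?_, ?_⟩
  · refine (card_le_card ?_).trans hVc
    intro u hu
    simp only [mem_filter, mem_univ, true_and] at hu
    obtain ⟨r, hr⟩ := hu
    exact (mem_filter.1 (mem_ausr.1 hr)).2
  · apply sum_le_sum
    intro i _
    rcases hforms i with ⟨r, r', f, hf, h⟩ | ⟨r, r', f, hf, h⟩ | ⟨r, r', l, hl, h⟩ |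
      ⟨r, r', l, hl, h⟩ | ⟨r, t, f, hf, h⟩ | ⟨t, ht, r, f, hf, h⟩
    · rw [h, h, hres, hres]
      apply hf.1
      exact_mod_cast card_le_card (inter_subset_inter inter_subset_left inter_subset_left)
    · rw [h, h, hres, hres]
      apply hf.1
      have key : ∀ a b : R, ((ares A a ∩ V) \ (ares A b ∩ V)).card ≤ (ares A a \ ares A b).card := by
        intro a b
        apply card_le_card
        intro u hu
        simp only [mem_sdiff, mem_inter] at hu ⊢
        tauto
      exact_mod_cast max_le_max (key r r') (key r' r)
    · rw [h, h, hres, hres]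
      by_cases he : ares A r = ares A r'
      · simp [he]
      · have hne : r ≠ r' := fun e => he (by rw [e])
        rw [if_pos]
        · exact Nat.zero_le _
        · intro heq
          apply he
          ext u
          by_contra hcon
          have hX : (ausr A u ∩ {r, r'}).Nonempty := by
            by_cases hu : u ∈ ares A r
            · exact ⟨r, by simpa [mem_ausr, mem_ares] using hu⟩
            · have hu' : u ∈ ares A r' := by tauto
              exact ⟨r', by simpa [mem_ausr, mem_ares] using hu'⟩
          obtain ⟨v, hvV, hv⟩ := hhit r r' hne _ inter_subset_right hX u rfl
          have e1 := Finset.ext_iff.1 hv r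
          have e2 := Finset.ext_iff.1 hv r'
          have e3 := Finset.ext_iff.1 heq v
          simp only [mem_inter, mem_insert, mem_singleton, mem_ausr, mem_ares, true_or, or_true,
            and_true, hvV] at e1 e2 e3 hcon
          tauto
    · by_cases hne : r = r'
      · subst hne
        rw [h, h, inter_self, inter_self, if_pos (hcomp r)]
        exact Nat.zero_le _
      · rw [h, h, hres, hres]
        by_cases he : (ares A r ∩ ares A r').Nonempty
        · rw [if_pos]
          · exact Nat.zero_le _
          · obtain ⟨u, hu⟩ := he
            simp only [mem_inter, mem_ares] at hu
            obtain ⟨v, hvV, hv⟩ := hhit r r' hne _ inter_subset_right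
              ⟨r, by simpa [mem_ausr] using hu.1⟩ u rfl
            have e1 := Finset.ext_iff.1 hv r
            have e2 := Finset.ext_iff.1 hv r'
            simp only [mem_inter, mem_insert, mem_singleton, mem_ausr, true_or, or_true,
              and_true] at e1 e2
            refine ⟨v, ?_⟩
            simp only [mem_inter, mem_ares]
            tauto
        · rw [if_neg he]
          split_ifs <;> omega
    · rw [h, h, hres]
      apply hf.1
      have := card_le_card (inter_subset_left : ares A r ∩ V ⊆ ares A r)
      omega
    · rw [h, h, hres]
      rcases hcard r with hh | hh
      · rw [hh]
      · rw [(hf.2 _).2 (by omega)]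
        exact Nat.zero_le _

end APEP
end

section
/- Let U and R be finite sets with |R| = k ≥ 2, let C be a finite set of weighted constraints on U × R each of one of the six standard forms (SoD_U, BoD_U, SoD_E, BoD_E, Card_UB, Card_LB), and let τ ≥ 1 be an integer such that τ ≥ t_c for every Card_LB constraint in C. Then C is 3τk·(k choose 2)-wbounded. -/
open Finset

namespace APEP

variable {U R : Type*} [Fintype U] [Fintype R] [DecidableEq U] [DecidableEq R]

/-- A (total) constraint-weight function `wC` is `t`-wbounded: every complete `A` with
`|A| > t` contains a strictly smaller complete `A'` of no larger weight. -/
def WBounded (wC : Finset (U × R) → ℕ) (t : ℕ) : Prop :=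
  ∀ A : Finset (U × R), Complete A → t < A.card →
    ∃ A' ⊆ A, Complete A' ∧ A'.card < A.card ∧ wC A' ≤ wC A

/-- A small set of users that must be kept for a pair of resources. -/
theorem pair_witness {V : Type*} [DecidableEq V] (X Y : Finset V) (hX : X.Nonempty)
    (hY : Y.Nonempty) (τ : ℕ) (hτ : 1 ≤ τ) :
    ∃ S : Finset V, S.card ≤ 3 * τ ∧ min τ X.card ≤ (X ∩ S).card ∧ min τ Y.card ≤ (Y ∩ S).card ∧
      ((X ∩ Y).Nonempty → ∃ u ∈ S, u ∈ X ∧ u ∈ Y) ∧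
      (X ≠ Y → ∃ d ∈ S, ¬ (d ∈ X ↔ d ∈ Y)) := by
  obtain ⟨u, huX, huY⟩ : ∃ u ∈ X, (X ∩ Y).Nonempty → u ∈ Y := by
    by_cases h : (X ∩ Y).Nonempty
    · obtain ⟨u, hu⟩ := h
      rw [mem_inter] at hu
      exact ⟨u, hu.1, fun _ => hu.2⟩
    · obtain ⟨u, hu⟩ := hX
      exact ⟨u, hu, fun h' => absurd h' h⟩
  obtain ⟨d, hd⟩ : ∃ d, X ≠ Y → ¬ (d ∈ X ↔ d ∈ Y) := by
    by_contra! h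
    exact (h u).1 (Finset.ext fun x => (h x).2)
  have hX1 : 1 ≤ X.card := card_pos.2 hX
  obtain ⟨S1, h1, h1X, h1c⟩ := Finset.exists_subsuperset_card_eq (s := {u}) (t := X)
    (n := min τ X.card) (by simpa using huX) (by rw [card_singleton]; omega) (min_le_right _ _)
  obtain ⟨S2, h2Y, h2c⟩ := Finset.exists_subset_card_eq (s := Y) (n := min τ Y.card)
    (min_le_right _ _)
  refine ⟨insert d (S1 ∪ S2), ?_, ?_, ?_, ?_, ?_⟩
  · have := card_insert_le d (S1 ∪ S2)
    have := card_union_le S1 S2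
    omega
  · rw [← h1c]
    apply card_le_card
    intro x hx
    have := h1X hx
    simp [*]
  · rw [← h2c]
    apply card_le_card
    intro x hx
    have := h2Y hx
    simp [*]
  · intro h
    have : u ∈ S1 := h1 (by simp)
    exact ⟨u, by simp [this], huX, huY h⟩
  · intro h
    exact ⟨d, by simp, hd h⟩

/-- A small set of users, for a pair of resources given as a two-element set. -/
theorem pair_witness' (A : Finset (U × R)) (hA : Complete A) (τ : ℕ) (hτ : 1 ≤ τ)
    (p : Finset R) (hp : p.card = 2) :
    ∃ S : Finset U, S.card ≤ 3 * τ ∧ (∀ a ∈ p, min τ (ares A a).card ≤ (ares A a ∩ S).card) ∧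
      (∀ a ∈ p, ∀ b ∈ p, a ≠ b → (ares A a ∩ ares A b).Nonempty →
        ∃ u ∈ S, u ∈ ares A a ∧ u ∈ ares A b) ∧
      (∀ a ∈ p, ∀ b ∈ p, ares A a ≠ ares A b → ∃ d ∈ S, ¬ (d ∈ ares A a ↔ d ∈ ares A b)) := by
  obtain ⟨r, r', hne, rfl⟩ := card_eq_two.1 hp
  obtain ⟨S, h1, h2, h3, h4, h5⟩ := pair_witness (ares A r) (ares A r') (hA r) (hA r') τ hτ
  refine ⟨S, h1, ?_, ?_, ?_⟩
  · intro a ha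
    simp only [mem_insert, mem_singleton] at ha
    rcases ha with rfl | rfl <;> assumption
  · intro a ha b hb hab hn
    simp only [mem_insert, mem_singleton] at ha hb
    rcases ha with rfl | rfl <;> rcases hb with rfl | rfl
    · exact absurd rfl hab
    · exact h4 hn
    · rw [inter_comm] at hn
      obtain ⟨u, a, b, c⟩ := h4 hn
      exact ⟨u, a, c, b⟩
    · exact absurd rfl hab
  · intro a ha b hb hab
    simp only [mem_insert, mem_singleton] at ha hb
    rcases ha with rfl | rfl <;> rcases hb with rfl | rfl
    · exact absurd rfl hab
    · exact h5 hab
    · obtain ⟨d, a, b⟩ := h5 hab.symm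
      exact ⟨d, a, fun h => b h.symm⟩
    · exact absurd rfl hab

/-- There is an occurring user that can be dropped. -/
theorem exists_removable (A : Finset (U × R)) (hA : Complete A) (τ : ℕ) (hτ : 1 ≤ τ)
    (hk2 : 2 ≤ Fintype.card R)
    (hc : 3 * τ * Fintype.card R * (Fintype.card R).choose 2 < A.card) :
    ∃ (u : U) (r : R), (u, r) ∈ A ∧
      (∀ a, min τ (ares A a).card ≤ ((ares A a).erase u).card) ∧
      (∀ a b, (ares A a ∩ ares A b).Nonempty →
        ((ares A a).erase u ∩ (ares A b).erase u).Nonempty) ∧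
      (∀ a b, ares A a ≠ ares A b → (ares A a).erase u ≠ (ares A b).erase u) := by
  choose! S hS1 hS2 hS3 hS4 using pair_witness' A hA τ hτ
  let P := (univ : Finset R).powersetCard 2
  have hM : (P.biUnion S).card ≤ (Fintype.card R).choose 2 * (3 * τ) := by
    have := card_biUnion_le_card_mul P S (3 * τ) (fun p hp => hS1 p (mem_powersetCard.1 hp).2)
    simpa [P, card_powersetCard] using this
  obtain ⟨⟨u, r⟩, hur, hu⟩ : ∃ x ∈ A, x.1 ∉ P.biUnion S := by
    by_contra! h
    have h1 : A ⊆ (P.biUnion S) ×ˢ (univ : Finset R) := fun x hx => by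
      rw [mem_product]
      exact ⟨h x hx, mem_univ _⟩
    have h2 := card_le_card h1
    rw [card_product, card_univ] at h2
    have h3 := Nat.mul_le_mul_right (Fintype.card R) hM
    have h4 : (Fintype.card R).choose 2 * (3 * τ) * Fintype.card R =
      3 * τ * Fintype.card R * (Fintype.card R).choose 2 := by ring
    omega
  have huS : ∀ p : Finset R, p.card = 2 → u ∉ S p := fun p hp h =>
    hu (mem_biUnion.2 ⟨p, mem_powersetCard.2 ⟨subset_univ _, hp⟩, h⟩)
  have hcard : ∀ a, min τ (ares A a).card ≤ ((ares A a).erase u).card := by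
    intro a
    have : Nontrivial R := Fintype.one_lt_card_iff_nontrivial.1 hk2
    obtain ⟨b, hb⟩ := exists_ne a
    have hp : ({a, b} : Finset R).card = 2 := card_pair hb.symm
    refine (hS2 _ hp a (by simp)).trans (card_le_card ?_)
    intro x hx
    rw [mem_inter] at hx
    refine mem_erase.2 ⟨?_, hx.1⟩
    rintro rfl
    exact huS _ hp hx.2
  refine ⟨u, r, hur, hcard, ?_, ?_⟩
  · intro a b hn
    by_cases hab : a = b
    · subst hab
      rw [inter_self]
      apply card_pos.1
      have := hcard a
      have := card_pos.2 (hA a)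
      omega
    · have hp : ({a, b} : Finset R).card = 2 := card_pair hab
      obtain ⟨v, hv, hva, hvb⟩ := hS3 _ hp a (by simp) b (by simp) hab hn
      have hvu : v ≠ u := by
        rintro rfl
        exact huS _ hp hv
      exact ⟨v, by simp [*]⟩
  · intro a b hne heq
    have hab : a ≠ b := by
      rintro rfl
      exact hne rfl
    have hp : ({a, b} : Finset R).card = 2 := card_pair hab
    obtain ⟨v, hv, hvn⟩ := hS4 _ hp a (by simp) b (by simp) hne
    have hvu : v ≠ u := by
      rintro rfl
      exact huS _ hp hv
    have := Finset.ext_iff.1 heq v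
    simp only [mem_erase, ne_eq, hvu, not_false_eq_true, true_and] at this
    exact hvn this

theorem standard_constraints_wbounded {ι : Type*} [Fintype ι]
    (w : ι → Finset (U × R) → ℕ) (k τ : ℕ)
    (hk : k = Fintype.card R) (hk2 : 2 ≤ k) (hτ : 1 ≤ τ)
    (hforms : ∀ i, IsSoDU (w i) ∨ IsBoDU (w i) ∨ IsSoDE (w i) ∨ IsBoDE (w i) ∨
      IsCardUB (w i) ∨ ∃ t ≤ τ, IsCardLB (w i) t) :
    WBounded (fun A => ∑ i, w i A) (3 * τ * k * k.choose 2) := by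
  subst hk
  intro A hA hc
  obtain ⟨u, r, hur, h1, h2, h3⟩ := exists_removable A hA τ hτ hk2 hc
  have he : ∀ a, ares (A.filter (fun x => x.1 ≠ u)) a = (ares A a).erase u := by
    intro a
    ext x
    simp [ares, and_comm]
  refine ⟨A.filter (fun x => x.1 ≠ u), filter_subset _ _, ?_, ?_, ?_⟩
  · intro a
    rw [he]
    apply card_pos.1
    have := h1 a
    have := card_pos.2 (hA a)
    omega
  · apply card_lt_card
    refine ⟨filter_subset _ _, fun h => ?_⟩
    have := h hur
    simp at this
  · apply sum_le_sum
    intro i _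
    have hsub : ∀ a, (ares A a).erase u ⊆ ares A a := fun a => erase_subset _ _
    rcases hforms i with ⟨a, b, f, hf, hw⟩ | ⟨a, b, f, hf, hw⟩ | ⟨a, b, l, hl, hw⟩ |
      ⟨a, b, l, hl, hw⟩ | ⟨a, t, f, hf, hw⟩ | ⟨t, ht, a, f, hf, hw⟩
    · rw [hw, hw, he, he]
      apply hf.1
      have := card_le_card (inter_subset_inter (hsub a) (hsub b))
      exact_mod_cast this
    · rw [hw, hw, he, he]
      apply hf.1
      have key : ∀ X Y : Finset U, (X.erase u \ Y.erase u).card ≤ (X \ Y).card := by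
        intro X Y
        apply card_le_card
        intro x
        simp only [mem_sdiff, mem_erase]
        tauto
      have k1 := key (ares A a) (ares A b)
      have k2 := key (ares A b) (ares A a)
      apply max_le_max <;> exact_mod_cast (by assumption)
    · rw [hw, hw, he, he]
      by_cases h : ares A a = ares A b
      · simp [h]
      · simp [h3 a b h]
    · rw [hw, hw, he, he]
      by_cases h : (ares A a ∩ ares A b).Nonempty
      · rw [if_pos (h2 a b h)]
        exact Nat.zero_le _
      · rw [if_neg h]
        split_ifs <;> omega
    · rw [hw, hw, he]
      apply hf.1
      have := card_le_card (hsub a)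
      omega
    · rw [hw, hw, he]
      have := h1 a
      by_cases h : τ ≤ (ares A a).card
      · rw [(hf.2 ((t : ℤ) - (((ares A a).erase u).card : ℤ))).2 (by omega)]
        exact Nat.zero_le _
      · apply hf.1
        omega

end APEP
end

section
/- Let U and R be finite sets, let C be a finite set of weighted constraints on U × R that is t-wbounded, and let ω be a weighted user authorization function. If there exists a complete authorization relation at all (i.e., U ≠ ∅ or R = ∅), then there exists a complete authorization relation A* with |A*| ≤ t such that w(A*) ≤ w(A') for every complete authorization relation A' ⊆ U × R. -/
open Finset

namespace APEP

variable {U R : Type*} [Fintype U] [Fintype R] [DecidableEq U] [DecidableEq R]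

theorem exists_small_optimal_solution {ι : Type*} [Fintype ι]
    (w : ι → Finset (U × R) → ℕ) (t : ℕ)
    (ω : U → Finset R → ℕ)
    (hω : ∀ (u : U) (T' T : Finset R), T' ⊆ T → ω u T' ≤ ω u T)
    (hwb : WBounded (fun A => ∑ i, w i A) t)
    (hex : Nonempty U ∨ IsEmpty R) :
    ∃ Astar : Finset (U × R), Complete Astar ∧ Astar.card ≤ t ∧
      ∀ A' : Finset (U × R), Complete A' →
        (∑ u, ω u (ausr Astar u)) + (∑ i, w i Astar) ≤
          (∑ u, ω u (ausr A' u)) + (∑ i, w i A') := by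
  have hc : ∃ A : Finset (U × R), Complete A := by
    refine ⟨univ, fun r => ?_⟩
    rcases hex with ⟨⟨u⟩⟩ | h
    · exact ⟨u, by simp [ares]⟩
    · exact h.elim r
  -- every complete relation can be shrunk to one of size at most `t` without increasing weight
  have key : ∀ n : ℕ, ∀ A : Finset (U × R), A.card = n → Complete A →
      ∃ B : Finset (U × R), Complete B ∧ B.card ≤ t ∧
        (∑ u, ω u (ausr B u)) + (∑ i, w i B) ≤
          (∑ u, ω u (ausr A u)) + (∑ i, w i A) := by
    intro n
    induction n using Nat.strong_induction_on with
    | _ n ih =>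
      intro A hn hA
      by_cases ht : A.card ≤ t
      · exact ⟨A, hA, ht, le_rfl⟩
      · obtain ⟨A', hsub, hA', hcard, hw⟩ := hwb A hA (not_le.mp ht)
        obtain ⟨B, hB, hBt, hBw⟩ := ih A'.card (hn ▸ hcard) A' rfl hA'
        refine ⟨B, hB, hBt, hBw.trans (add_le_add (Finset.sum_le_sum fun u _ => ?_) hw)⟩
        apply hω
        intro r hr
        simp only [ausr, mem_filter, mem_univ, true_and] at hr ⊢
        exact hsub hr
  classical
  obtain ⟨A₀, hA₀⟩ := hc
  obtain ⟨M, hM, hmin⟩ := Finset.exists_min_image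
    (univ.filter (fun A : Finset (U × R) => Complete A))
    (fun A => (∑ u, ω u (ausr A u)) + (∑ i, w i A)) ⟨A₀, by simpa using hA₀⟩
  obtain ⟨B, hB, hBt, hBw⟩ := key _ M rfl (by simpa using hM)
  exact ⟨B, hB, hBt, fun A' hA' => hBw.trans (hmin A' (by simpa using hA'))⟩

end APEP
end

section
/- Let U and R be finite sets, let w_c be a user-independent weighted constraint on U × R, and let A₁, A₂ ⊆ U × R be authorization relations such that usr_{A₁}(T) = usr_{A₂}(T) for every T ⊆ R. Then w_c(A₁) = w_c(A₂). -/
open Finset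

namespace APEP

variable {U R : Type*} [Fintype U] [Fintype R] [DecidableEq U] [DecidableEq R]

/-- The action of a permutation of users on an authorization relation:
`σ(A) = {(σ(u), r) : (u,r) ∈ A}`. -/
def permAuth (σ : Equiv.Perm U) (A : Finset (U × R)) : Finset (U × R) :=
  A.image (fun p => (σ p.1, p.2))

/-- A weighted constraint is user-independent if its weight is invariant under
permutations of the users. -/
def UserIndependent (w : Finset (U × R) → ℕ) : Prop :=
  ∀ (σ : Equiv.Perm U) (A : Finset (U × R)), w (permAuth σ A) = w A

/-- The user profile of `A`: the number of users authorized by `A` for exactly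
the set `T` of resources. -/
def usrProfile (A : Finset (U × R)) (T : Finset R) : ℕ :=
  (univ.filter (fun u => ausr A u = T)).card

theorem weight_eq_of_usrProfile_eq (w : Finset (U × R) → ℕ)
    (hw : UserIndependent w) (A₁ A₂ : Finset (U × R))
    (h : ∀ T : Finset R, usrProfile A₁ T = usrProfile A₂ T) :
    w A₁ = w A₂ := by
  have e : ∀ T : Finset R, Nonempty ({u // ausr A₁ u = T} ≃ {u // ausr A₂ u = T}) := by
    intro T
    refine ⟨Fintype.equivOfCardEq ?_⟩
    rw [Fintype.card_subtype, Fintype.card_subtype]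
    exact h T
  let σ : Equiv.Perm U := Equiv.ofFiberEquiv (fun T => (e T).some)
  have hσ : ∀ u, ausr A₂ (σ u) = ausr A₁ u :=
    fun u => Equiv.ofFiberEquiv_map (fun T => (e T).some) u
  have hmem : ∀ u r, (σ u, r) ∈ A₂ ↔ (u, r) ∈ A₁ := by
    intro u r
    have := congrArg (fun S => r ∈ S) (hσ u)
    simpa [ausr] using this
  have hA : permAuth σ A₁ = A₂ := by
    ext ⟨u, r⟩
    simp only [permAuth, Finset.mem_image, Prod.mk.injEq, Prod.exists]
    constructor
    · rintro ⟨a, b, hab, rfl, rfl⟩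
      exact (hmem a b).2 hab
    · intro hu
      refine ⟨σ.symm u, r, ?_, by simp, rfl⟩
      rw [← hmem]
      simpa using hu
  rw [← hA, hw]

end APEP
end

section
/- Let U and R be finite sets and let A₁, A₂ ⊆ U × R be authorization relations such that usr_{A₁}(T) = usr_{A₂}(T) for every T ⊆ R. Then there exists a permutation σ of U such that σ(A₁) = A₂. -/
open Finset

namespace APEP

variable {U R : Type*} [Fintype U] [Fintype R] [DecidableEq U] [DecidableEq R]

theorem exists_perm_of_usrProfile_eq (A₁ A₂ : Finset (U × R))
    (h : ∀ T : Finset R, usrProfile A₁ T = usrProfile A₂ T) :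
    ∃ σ : Equiv.Perm U, permAuth σ A₁ = A₂ := by
  have e : ∀ T : Finset R, Nonempty ({u // ausr A₁ u = T} ≃ {u // ausr A₂ u = T}) := by
    intro T
    refine ⟨Fintype.equivOfCardEq ?_⟩
    rw [Fintype.card_subtype, Fintype.card_subtype]
    exact h T
  let σ : Equiv.Perm U := Equiv.ofFiberEquiv (fun T => (e T).some)
  have hσ : ∀ u, ausr A₂ (σ u) = ausr A₁ u := fun u => Equiv.ofFiberEquiv_map _ u
  have key : ∀ u r, (σ u, r) ∈ A₂ ↔ (u, r) ∈ A₁ := by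
    intro u r
    have := Finset.ext_iff.mp (hσ u) r
    simpa [ausr] using this
  refine ⟨σ, ?_⟩
  ext ⟨v, r⟩
  simp only [permAuth, Finset.mem_image, Prod.mk.injEq, Prod.exists]
  constructor
  · rintro ⟨u, r', hm, rfl, rfl⟩
    exact (key u r').mpr hm
  · intro hv
    refine ⟨σ.symm v, r, (key _ _).mp ?_, by simp, rfl⟩
    simpa using hv

end APEP
end

section
/- For all natural numbers ℓ and k with ℓ ≥ 4, C(ℓ + 2^k − 1, ℓ) ≤ min(2^{ℓk}, ℓ^{2^k − 1}) + 1. -/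
theorem aux_choose_step (n j c B : ℕ) (h : n.choose j ≤ B) (hc : n + 1 ≤ c * (j + 1)) :
    (n + 1).choose (j + 1) ≤ B * c := by
  have h1 := Nat.add_one_mul_choose_eq n j
  have h2 : (n + 1) * n.choose j ≤ (c * (j + 1)) * B := Nat.mul_le_mul hc h
  have h3 : (n + 1).choose (j + 1) * (j + 1) ≤ (B * c) * (j + 1) := by
    rw [← h1]; calc _ ≤ _ := h2
      _ = _ := by ring
  exact Nat.le_of_mul_le_mul_right h3 (Nat.succ_pos j)

theorem aux_choose_first (r l : ℕ) : (l + r).choose l ≤ (r + 1) ^ l := by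
  induction l with
  | zero => simp
  | succ l ih =>
    rw [pow_succ, show l + 1 + r = l + r + 1 by ring]
    exact aux_choose_step _ _ _ _ ih (by nlinarith [Nat.zero_le (r * l)])

theorem aux_choose_second (l : ℕ) (hl : 4 ≤ l) (r : ℕ) :
    (l + (r + 2)).choose (r + 2) ≤ l ^ (r + 2) := by
  induction r with
  | zero =>
    have h := Nat.add_one_mul_choose_eq (l + 1) 1
    simp only [Nat.choose_one_right] at h
    simp only [Nat.zero_add]
    have h' : (l + 1 + 1) * (l + 1) = (l + 2).choose 2 * 2 := h
    nlinarith
  | succ r ih =>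
    rw [pow_succ l (r + 2)]
    exact aux_choose_step (l + (r + 2)) (r + 2) l _ ih (by nlinarith [Nat.mul_le_mul_right r hl])

theorem choose_le_min_pow_bound (ℓ k : ℕ) (hℓ : 4 ≤ ℓ) :
    (ℓ + 2 ^ k - 1).choose ℓ ≤ min (2 ^ (ℓ * k)) (ℓ ^ (2 ^ k - 1)) + 1 := by
  obtain ⟨r, hr⟩ : ∃ r, 2 ^ k = r + 1 := ⟨2 ^ k - 1, by have := Nat.two_pow_pos k; omega⟩
  rw [mul_comm ℓ k, pow_mul, hr]
  simp only [← Nat.add_assoc, Nat.add_sub_cancel]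
  rw [← min_add_add_right]
  refine le_min ((aux_choose_first r ℓ).trans (Nat.le_succ _)) ?_
  rw [Nat.choose_symm_add]
  match r with
  | 0 => simp
  | 1 => simp
  | r + 2 => exact (aux_choose_second ℓ hℓ r).trans (Nat.le_succ _)
end

section
/- Let U and R be finite sets with |R| = k, let f ∈ ℕ, and let w_c be a weighted constraint on U × R that is f-bounded. Then the singleton set {w_c} is (f·k)-wbounded. -/
open Finset

namespace APEP

variable {U R : Type*} [Fintype U] [Fintype R] [DecidableEq U] [DecidableEq R]

/-- `A − u`: the relation obtained from `A` by removing all pairs involving user `u`. -/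
def delUser (A : Finset (U × R)) (u : U) : Finset (U × R) := A.filter (fun p => p.1 ≠ u)

/-- A weighted constraint `w` is `f`-bounded: for every complete `A` there is a set `U'`
of at most `f` users such that removing any user outside `U'` keeps `A` complete and
does not increase the weight. -/
def FBounded (w : Finset (U × R) → ℕ) (f : ℕ) : Prop :=
  ∀ A : Finset (U × R), Complete A → ∃ U' : Finset U, U'.card ≤ f ∧
    ∀ u : U, u ∉ U' → Complete (delUser A u) ∧ w (delUser A u) ≤ w A

theorem fbounded_imp_wbounded (w : Finset (U × R) → ℕ) (f k : ℕ)
    (hk : k = Fintype.card R) (hf : FBounded w f) :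
    WBounded w (f * k) := by
  intro A hA ht
  obtain ⟨U', hU, h⟩ := hf A hA
  have hex : ∃ p ∈ A, p.1 ∉ U' := by
    by_contra! hc
    have hsub : A ⊆ U' ×ˢ (univ : Finset R) := by
      intro p hp
      simpa using hc p hp
    have h1 := Finset.card_le_card hsub
    rw [Finset.card_product, Finset.card_univ, ← hk] at h1
    have h2 := Nat.mul_le_mul_right k hU
    omega
  obtain ⟨p, hp, hpU⟩ := hex
  obtain ⟨hc, hw⟩ := h p.1 hpU
  refine ⟨delUser A p.1, Finset.filter_subset _ _, hc, ?_, hw⟩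
  apply Finset.card_lt_card
  refine Finset.filter_ssubset.2 ⟨p, hp, by simp⟩

end APEP
end

section
/- Let G be a simple graph on vertex set {1, …, n}, let k be a positive integer with k ≤ n, and let ℓ ≥ 1 satisfy 2^{ℓ−1} ≤ k < 2^ℓ. Let R be a set of ℓ resources, let U be a set of k·n users, and let τ = {T₁, …, T_k} be a family of k pairwise distinct nonempty subsets of R. For each i ∈ {1, …, n} let X_i = {i} ∪ {j : vertex j is adjacent to vertex i in G}. Then G has a dominating set of size at most k if and only if there exists a complete authorization relation A ⊆ U × R such that for every i ∈ {1, …, n} there exist T ∈ τ and x ∈ X_i with usr_A(T) = x. -/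
open Finset

namespace APEP

variable {U R : Type*} [Fintype U] [Fintype R] [DecidableEq U] [DecidableEq R]

/-- `X_i`: the set of (1-based) indices of the vertices in the closed neighbourhood
of vertex `i` of `G`. -/
def closedNbhdIdx {n : ℕ} (G : SimpleGraph (Fin n)) [DecidableRel G.Adj] (i : Fin n) :
    Finset ℕ :=
  (insert i (G.neighborFinset i)).image (fun v : Fin n => (v : ℕ) + 1)

theorem dominatingSet_iff_apep (n k ℓ : ℕ) (G : SimpleGraph (Fin n))
    [DecidableRel G.Adj]
    (hk1 : 1 ≤ k) (hkn : k ≤ n) (hℓ : 1 ≤ ℓ)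
    (hlow : 2 ^ (ℓ - 1) ≤ k) (hhigh : k < 2 ^ ℓ)
    (hR : Fintype.card R = ℓ) (hU : Fintype.card U = k * n)
    (T : Fin k → Finset R) (hTne : ∀ j, (T j).Nonempty)
    (hTinj : Function.Injective T) :
    (∃ S : Finset (Fin n), S.card ≤ k ∧ ∀ v ∉ S, ∃ s ∈ S, G.Adj v s) ↔
      (∃ A : Finset (U × R), Complete A ∧
        ∀ i : Fin n, ∃ (j : Fin k) (x : ℕ),
          x ∈ closedNbhdIdx G i ∧ usrProfile A (T j) = x) := by
  classical
  constructor
  · rintro ⟨S, hSk, hS⟩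
    obtain ⟨S', hSS', hS'⟩ := Finset.exists_superset_card_eq hSk (by simpa using hkn)
    let g := S'.equivFinOfCardEq hS'
    let f : Fin k → Fin n := fun j => (g.symm j : Fin n)
    have hf : ∀ v ∈ S, ∃ j, f j = v := fun v hv =>
      ⟨g ⟨v, hSS' hv⟩, by simp [f]⟩
    have hcard : Fintype.card (Σ j : Fin k, Fin ((f j : ℕ) + 1)) ≤ Fintype.card U := by
      rw [hU, Fintype.card_sigma]
      calc ∑ j : Fin k, Fintype.card (Fin ((f j : ℕ) + 1)) ≤ ∑ _j : Fin k, n := by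
            apply Finset.sum_le_sum
            intro j _
            have := (f j).isLt
            simp only [Fintype.card_fin]
            omega
        _ = k * n := by simp
    obtain ⟨e⟩ := Function.Embedding.nonempty_of_card_le hcard
    let A : Finset (U × R) := univ.filter (fun q => ∃ p, e p = q.1 ∧ q.2 ∈ T p.1)
    have hA : ∀ u r, (u, r) ∈ A ↔ ∃ p, e p = u ∧ r ∈ T p.1 := by
      intro u r
      simp only [A, mem_filter, mem_univ, true_and]
    have hAe : ∀ p, ausr A (e p) = T p.1 := by
      intro p
      ext r
      simp only [ausr, mem_filter, mem_univ, true_and, hA]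
      constructor
      · rintro ⟨q, hq, hr⟩
        rwa [e.injective hq] at hr
      · intro hr
        exact ⟨p, rfl, hr⟩
    have hprof : ∀ j, usrProfile A (T j) = (f j : ℕ) + 1 := by
      intro j
      have : (univ.filter (fun u => ausr A u = T j)) =
          (univ : Finset (Fin ((f j : ℕ) + 1))).image (fun i => e ⟨j, i⟩) := by
        ext u
        simp only [mem_filter, mem_univ, true_and, mem_image]
        constructor
        · intro hu
          obtain ⟨r, hr⟩ := hTne j
          rw [← hu] at hr
          simp only [ausr, mem_filter, mem_univ, true_and, hA] at hr
          obtain ⟨p, rfl, -⟩ := hr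
          rw [hAe] at hu
          obtain ⟨j', i⟩ := p
          obtain rfl := hTinj hu
          exact ⟨i, rfl⟩
        · rintro ⟨i, rfl⟩
          exact hAe _
      rw [usrProfile, this, Finset.card_image_of_injective]
      · simp
      · intro a b hab
        simpa using e.injective hab
    refine ⟨A, ?_, ?_⟩
    · intro r
      have : ∃ j, r ∈ T j := by
        by_contra hno
        push Not at hno
        have hsub : (univ.image T) ⊆ ((univ.erase r).powerset).erase ∅ := by
          intro X hX
          obtain ⟨j, -, rfl⟩ := mem_image.1 hX
          refine mem_erase.2 ⟨(hTne j).ne_empty, mem_powerset.2 fun x hx => ?_⟩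
          refine mem_erase.2 ⟨?_, mem_univ _⟩
          rintro rfl
          exact hno j hx
        have h := Finset.card_le_card hsub
        rw [Finset.card_image_of_injective _ hTinj,
          Finset.card_erase_of_mem (empty_mem_powerset _), card_powerset,
          Finset.card_erase_of_mem (mem_univ _), Finset.card_univ, Finset.card_univ, hR,
          Fintype.card_fin] at h
        have : 0 < 2 ^ (ℓ - 1) := by positivity
        omega
      obtain ⟨j, hj⟩ := this
      exact ⟨e ⟨j, 0⟩, by
        simp only [ares, mem_filter, mem_univ, true_and, hA]
        exact ⟨_, rfl, hj⟩⟩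
    · intro i
      by_cases hi : i ∈ S
      · obtain ⟨j, hj⟩ := hf i hi
        refine ⟨j, _, ?_, hprof j⟩
        rw [hj]
        exact mem_image.2 ⟨i, by simp, rfl⟩
      · obtain ⟨s, hs, hadj⟩ := hS i hi
        obtain ⟨j, hj⟩ := hf s hs
        refine ⟨j, _, ?_, hprof j⟩
        rw [hj]
        exact mem_image.2 ⟨s, by simp [hadj], rfl⟩
  · rintro ⟨A, -, hA⟩
    refine ⟨univ.filter (fun v : Fin n => ∃ j, usrProfile A (T j) = (v : ℕ) + 1), ?_, ?_⟩
    · have h : ((univ.filter (fun v : Fin n => ∃ j, usrProfile A (T j) = (v : ℕ) + 1)).image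
          (fun v : Fin n => (v : ℕ) + 1)) ⊆ univ.image (fun j => usrProfile A (T j)) := by
        intro x hx
        obtain ⟨v, hv, rfl⟩ := mem_image.1 hx
        obtain ⟨j, hj⟩ := (mem_filter.1 hv).2
        exact mem_image.2 ⟨j, mem_univ _, hj⟩
      have h1 := Finset.card_le_card h
      rw [Finset.card_image_of_injective _ (fun a b hab => by
        apply Fin.ext; simpa using hab)] at h1
      refine h1.trans (Finset.card_image_le.trans (by simp))
    · intro v hv
      obtain ⟨j, x, hx, hjx⟩ := hA v
      obtain ⟨w, hw, rfl⟩ := mem_image.1 hx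
      have hwS : w ∈ univ.filter (fun v : Fin n => ∃ j, usrProfile A (T j) = (v : ℕ) + 1) :=
        mem_filter.2 ⟨mem_univ _, j, hjx⟩
      rcases mem_insert.1 hw with rfl | hw
      · exact absurd hwS hv
      · exact ⟨w, hwS, by simpa using hw⟩

end APEP
end

section
/- Let U and R be finite sets, let ω be a weighted user authorization function, and let C be a finite set of weighted constraints on U × R each of the form w_c(A) = f_c(|A(r_c) ∩ A(r'_c)|) for some r_c, r'_c ∈ R and a monotonically increasing function f_c : ℤ → ℕ with f_c(z) = 0 iff z ≤ 0 (SoD_U constraints). Let A* be a complete authorization relation with w(A*) ≤ w(B) for every complete authorization relation B, and let A' ⊆ A* be any authorization relation with |A'(r)| = 1 for every r ∈ R. Then A' is complete and w(A') ≤ w(B) for every complete authorization relation B. -/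
open Finset

namespace APEP

variable {U R : Type*} [Fintype U] [Fintype R] [DecidableEq U] [DecidableEq R]

theorem sodU_subrelation_optimal {ι : Type*} [Fintype ι]
    (ω : U → Finset R → ℕ)
    (hω : ∀ (u : U) (T' T : Finset R), T' ⊆ T → ω u T' ≤ ω u T)
    (rc rc' : ι → R) (f : ι → ℤ → ℕ) (hf : ∀ i, MonoIncZero (f i))
    -- the total weight of an authorization relation, with SoD_U constraints only
    (wt : Finset (U × R) → ℕ)
    (hwt : ∀ A, wt A = (∑ u, ω u (ausr A u)) +
      ∑ i, f i (((ares A (rc i)) ∩ (ares A (rc' i))).card))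
    (Astar : Finset (U × R)) (hAstar : Complete Astar)
    (hopt : ∀ B : Finset (U × R), Complete B → wt Astar ≤ wt B)
    (A' : Finset (U × R)) (hsub : A' ⊆ Astar)
    (hone : ∀ r : R, (ares A' r).card = 1) :
    Complete A' ∧ ∀ B : Finset (U × R), Complete B → wt A' ≤ wt B := by
  have hr : ∀ r, ares A' r ⊆ ares Astar r := by
    intro r u hu
    simp only [ares, mem_filter, mem_univ, true_and] at hu ⊢
    exact hsub hu
  have hu : ∀ u, ausr A' u ⊆ ausr Astar u := by
    intro u r hr
    simp only [ausr, mem_filter, mem_univ, true_and] at hr ⊢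
    exact hsub hr
  refine ⟨fun r => card_pos.mp (by rw [hone r]; exact Nat.one_pos), fun B hB => le_trans ?_ (hopt B hB)⟩
  rw [hwt, hwt]
  refine Nat.add_le_add (sum_le_sum fun u _ => hω u _ _ (hu u)) (sum_le_sum fun i _ => (hf i).1 ?_)
  exact_mod_cast card_le_card (inter_subset_inter (hr _) (hr _))

end APEP
end

section
/- Let U and R be finite sets, let ω be a weighted user authorization function, and let C be a finite set of weighted constraints on U × R, each of which is either of the form w_c(A) = f_c(|A(r_c) ∩ A(r'_c)|) (SoD_U) or of the form w_c(A) = f_c(max(|A(r_c) \ A(r'_c)|, |A(r'_c) \ A(r_c)|)) (BoD_U), where r_c, r'_c ∈ R and f_c : ℤ → ℕ is monotonically increasing with f_c(z) = 0 iff z ≤ 0. Let A* be a complete authorization relation with w(A*) ≤ w(B) for every complete authorization relation B. Then there exists an authorization relation A' ⊆ A* with |A'(r)| = 1 for every r ∈ R such that w(A') ≤ w(B) for every complete authorization relation B. -/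
open Finset

namespace APEP

variable {U R : Type*} [Fintype U] [Fintype R] [DecidableEq U] [DecidableEq R]

theorem bodU_sodU_exists_singleton_optimal
    {ιs ιb : Type*} [Fintype ιs] [Fintype ιb]
    (ω : U → Finset R → ℕ)
    (hω : ∀ (u : U) (T' T : Finset R), T' ⊆ T → ω u T' ≤ ω u T)
    -- SoD_U constraints, indexed by ιs
    (rs rs' : ιs → R) (fs : ιs → ℤ → ℕ) (hfs : ∀ i, MonoIncZero (fs i))
    -- BoD_U constraints, indexed by ιb
    (rb rb' : ιb → R) (fb : ιb → ℤ → ℕ) (hfb : ∀ i, MonoIncZero (fb i))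
    -- the total weight of an authorization relation
    (wt : Finset (U × R) → ℕ)
    (hwt : ∀ A, wt A = (∑ u, ω u (ausr A u)) +
      ((∑ i, fs i (((ares A (rs i)) ∩ (ares A (rs' i))).card)) +
        ∑ i, fb i (max ((ares A (rb i) \ ares A (rb' i)).card)
          ((ares A (rb' i) \ ares A (rb i)).card))))
    (Astar : Finset (U × R)) (hAstar : Complete Astar)
    (hopt : ∀ B : Finset (U × R), Complete B → wt Astar ≤ wt B) :
    ∃ A' ⊆ Astar, (∀ r : R, (ares A' r).card = 1) ∧
      ∀ B : Finset (U × R), Complete B → wt A' ≤ wt B := by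
  have key : ∀ (S T : Finset U) (hS : S.Nonempty) (hT : T.Nonempty), S = T →
      hS.choose = hT.choose := by
    intro S T hS hT h
    subst h
    rfl
  obtain ⟨g, hg, hgeq⟩ : ∃ g : R → U, (∀ r, g r ∈ ares Astar r) ∧
      ∀ r r', ares Astar r = ares Astar r' → g r = g r' :=
    ⟨fun r => (hAstar r).choose, fun r => (hAstar r).choose_spec,
      fun r r' h => key _ _ _ _ h⟩
  have hsub : (univ.image (fun r => (g r, r)) : Finset (U × R)) ⊆ Astar := by
    intro x hx
    obtain ⟨r, -, rfl⟩ := Finset.mem_image.1 hx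
    simpa [ares] using hg r
  have hres : ∀ r, ares (univ.image (fun r => (g r, r)) : Finset (U × R)) r = {g r} := by
    intro r
    ext u
    simp only [ares, mem_filter, mem_univ, true_and, mem_image, Prod.mk.injEq, mem_singleton]
    constructor
    · rintro ⟨a, rfl, rfl⟩
      rfl
    · rintro rfl
      exact ⟨r, rfl, rfl⟩
  refine ⟨univ.image (fun r => (g r, r)), hsub, fun r => by rw [hres]; simp, ?_⟩
  intro B hB
  refine le_trans ?_ (hopt B hB)
  rw [hwt, hwt]
  refine add_le_add ?_ (add_le_add ?_ ?_)
  · refine Finset.sum_le_sum fun u _ => hω u _ _ ?_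
    intro r hr
    simp only [ausr, mem_filter, mem_univ, true_and] at hr ⊢
    exact hsub hr
  · refine Finset.sum_le_sum fun i _ => (hfs i).1 ?_
    have : ∀ r, ares (univ.image (fun r => (g r, r)) : Finset (U × R)) r ⊆ ares Astar r := by
      intro r
      rw [hres]
      simpa using hg r
    exact_mod_cast Finset.card_le_card (Finset.inter_subset_inter (this _) (this _))
  · refine Finset.sum_le_sum fun i _ => (hfb i).1 ?_
    rw [hres, hres]
    by_cases h : ares Astar (rb i) = ares Astar (rb' i)
    · rw [hgeq _ _ h, h]
      simp
    · have h1 : ∀ a b : U, (({a} : Finset U) \ {b}).card ≤ 1 := fun a b =>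
        (Finset.card_le_card Finset.sdiff_subset).trans (by simp)
      have h2 : 1 ≤ max ((ares Astar (rb i) \ ares Astar (rb' i)).card)
          ((ares Astar (rb' i) \ ares Astar (rb i)).card) := by
        by_contra hc
        have h3 : (ares Astar (rb i) \ ares Astar (rb' i)).card = 0 := by omega
        have h4 : (ares Astar (rb' i) \ ares Astar (rb i)).card = 0 := by omega
        rw [Finset.card_eq_zero, Finset.sdiff_eq_empty_iff_subset] at h3 h4
        exact h (h3.antisymm h4)
      have h5 := max_le (h1 (g (rb i)) (g (rb' i))) (h1 (g (rb' i)) (g (rb i)))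
      exact_mod_cast h5.trans h2

end APEP
end

section
/- Let U be a nonempty finite set and R a finite set, let ω be a weighted user authorization function, and let C be a finite set of weighted constraints on U × R, each of which is either of the form w_c(A) = f_c(|A(r_c) ∩ A(r'_c)|) (SoD_U) or of the form w_c(A) = f_c(max(|A(r_c) \ A(r'_c)|, |A(r'_c) \ A(r_c)|)) (BoD_U), where r_c, r'_c ∈ R and f_c : ℤ → ℕ is monotonically increasing with f_c(z) = 0 iff z ≤ 0. For a function π : R → U define its plan weight W(π) = Σ_{u ∈ U} ω(u, {r ∈ R : π(r) = u}) + Σ over SoD_U constraints c of (f_c(1) if π(r_c) = π(r'_c), else 0) + Σ over BoD_U constraints c of (f_c(1) if π(r_c) ≠ π(r'_c), else 0). Then the minimum of w(A) over all complete authorization relations A ⊆ U × R equals the minimum of W(π) over all functions π : R → U. -/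
open Finset

namespace APEP

variable {U R : Type*} [Fintype U] [Fintype R] [DecidableEq U] [DecidableEq R]

theorem bodU_sodU_valuedWSP_reduction
    [Nonempty U] {ιs ιb : Type*} [Fintype ιs] [Fintype ιb]
    (ω : U → Finset R → ℕ)
    (hω : ∀ (u : U) (T' T : Finset R), T' ⊆ T → ω u T' ≤ ω u T)
    -- SoD_U constraints, indexed by ιs
    (rs rs' : ιs → R) (fs : ιs → ℤ → ℕ) (hfs : ∀ i, MonoIncZero (fs i))
    -- BoD_U constraints, indexed by ιb
    (rb rb' : ιb → R) (fb : ιb → ℤ → ℕ) (hfb : ∀ i, MonoIncZero (fb i))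
    -- the total weight of an authorization relation
    (wt : Finset (U × R) → ℕ)
    (hwt : ∀ A, wt A = (∑ u, ω u (ausr A u)) +
      ((∑ i, fs i (((ares A (rs i)) ∩ (ares A (rs' i))).card)) +
        ∑ i, fb i (max ((ares A (rb i) \ ares A (rb' i)).card)
          ((ares A (rb' i) \ ares A (rb i)).card))))
    -- the weight of a plan `π : R → U`
    (W : (R → U) → ℕ)
    (hW : ∀ π : R → U, W π = (∑ u, ω u (univ.filter (fun r => π r = u))) +
      ((∑ i, if π (rs i) = π (rs' i) then fs i 1 else 0) +
        ∑ i, if π (rb i) ≠ π (rb' i) then fb i 1 else 0)) :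
    sInf {n : ℕ | ∃ A : Finset (U × R), Complete A ∧ wt A = n} =
      sInf {n : ℕ | ∃ π : R → U, W π = n} := by
  have key : ∀ A : Finset (U × R), Complete A → ∃ π : R → U, W π ≤ wt A := by
    intro A hA
    let g : Finset U → U := fun s => if h : s.Nonempty then h.choose else Classical.arbitrary U
    have hg : ∀ s : Finset U, s.Nonempty → g s ∈ s := by
      intro s h
      simp only [g, dif_pos h]
      exact h.choose_spec
    have hm : ∀ r, g (ares A r) ∈ ares A r := fun r => hg _ (hA r)
    refine ⟨fun r => g (ares A r), ?_⟩
    rw [hW, hwt]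
    refine add_le_add (Finset.sum_le_sum fun u _ => hω _ _ _ ?_)
      (add_le_add (Finset.sum_le_sum fun i _ => ?_) (Finset.sum_le_sum fun i _ => ?_))
    · intro r hr
      simp only [mem_filter, mem_univ, true_and] at hr
      have := hm r
      rw [hr] at this
      simpa [ares, ausr] using this
    · split_ifs with h
      · apply (hfs i).1
        have : 0 < (ares A (rs i) ∩ ares A (rs' i)).card := by
          apply Finset.card_pos.2
          refine ⟨g (ares A (rs i)), Finset.mem_inter.2 ⟨hm _, ?_⟩⟩
          rw [h]
          exact hm _
        exact_mod_cast this
      · exact Nat.zero_le _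
    · split_ifs with h
      · apply (hfb i).1
        by_contra hc
        apply h
        have h1 : (ares A (rb i) \ ares A (rb' i)).card = 0 := by omega
        have h2 : (ares A (rb' i) \ ares A (rb i)).card = 0 := by omega
        rw [Finset.card_eq_zero, Finset.sdiff_eq_empty_iff_subset] at h1 h2
        rw [Finset.Subset.antisymm h1 h2]
      · exact Nat.zero_le _
  have key2 : ∀ π : R → U, ∃ A : Finset (U × R), Complete A ∧ wt A = W π := by
    intro π
    let A : Finset (U × R) := univ.filter (fun p => π p.2 = p.1)
    have har : ∀ r, ares A r = {π r} := by
      intro r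
      ext u
      simp [ares, A, eq_comm]
    have hau : ∀ u, ausr A u = univ.filter (fun r => π r = u) := by
      intro u
      ext r
      simp [ausr, A]
    refine ⟨A, fun r => by rw [har]; simp, ?_⟩
    rw [hW, hwt]
    simp only [har, hau]
    congr 2
    · refine Finset.sum_congr rfl fun i _ => ?_
      split_ifs with h
      · simp [h]
      · rw [Finset.singleton_inter_of_notMem (by simpa using h)]
        simpa using ((hfs i).2 0).2 le_rfl
    · refine Finset.sum_congr rfl fun i _ => ?_
      split_ifs with h
      · rw [Finset.sdiff_eq_self_of_disjoint (by simpa using h),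
          Finset.sdiff_eq_self_of_disjoint (by simpa using Ne.symm h)]
        simp
      · rw [not_not] at h
        rw [h]
        simpa using ((hfb i).2 0).2 le_rfl
  apply le_antisymm
  · obtain ⟨π, hπ⟩ := Nat.sInf_mem
      (s := {n : ℕ | ∃ π : R → U, W π = n}) ⟨_, fun _ => Classical.arbitrary U, rfl⟩
    obtain ⟨A, hA, hAw⟩ := key2 π
    rw [← hπ]
    exact Nat.sInf_le ⟨A, hA, hAw⟩
  · obtain ⟨A₀, hA₀, _⟩ := key2 (fun _ => Classical.arbitrary U)
    obtain ⟨A, hA, hAw⟩ := Nat.sInf_mem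
      (s := {n : ℕ | ∃ A : Finset (U × R), Complete A ∧ wt A = n}) ⟨_, A₀, hA₀, rfl⟩
    rw [← hAw]
    obtain ⟨π, hπ⟩ := key A hA
    exact le_trans (Nat.sInf_le ⟨π, rfl⟩) hπ

end APEP
end

section
/- Let U and R be finite sets with |R| = k, and let C consist of: a finite set C_SoD of weighted constraints, each of the form w_c(A) = p_SoD · |A(r_c) ∩ A(r'_c)| for some r_c, r'_c ∈ R; a finite set C_Card of weighted constraints, each of the form w_c(A) = p_Card · max(0, ℓ_c − |A(r_c)|) for some r_c ∈ R and ℓ_c ∈ ℕ; and one user-count constraint w_Π(A) = |A(R)|², where A(R) = {u ∈ U : A(u) ≠ ∅} and p_SoD, p_Card ∈ ℕ. Then: (i) if A ⊆ U × R satisfies 2·|A(R)| > |C_Card|·p_Card + 1, then for every user u with A(u) ≠ ∅, w_C(A − u) < w_C(A), where A − u = A \ ({u} × R); consequently (ii) every authorization relation A minimizing w_C over all subsets of U × R satisfies 2·|A(R)| ≤ |C_Card|·p_Card + 1, and hence 2·|A| ≤ k·(|C_Card|·p_Card + 1). -/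
open Finset

namespace APEP

variable {U R : Type*} [Fintype U] [Fintype R] [DecidableEq U] [DecidableEq R]

/-- `A(R)`: the set of users authorized by `A` for at least one resource. -/
def involved (A : Finset (U × R)) : Finset U :=
  univ.filter (fun u => (ausr A u).Nonempty)

theorem ares_delUser (A : Finset (U × R)) (u : U) (r : R) :
    ares (delUser A u) r = (ares A r).erase u := by
  ext v
  simp only [ares, delUser, mem_filter, mem_univ, true_and, mem_erase]
  tauto

theorem involved_delUser (A : Finset (U × R)) (u : U) :
    involved (delUser A u) = (involved A).erase u := by
  ext v
  simp only [involved, ausr, delUser, mem_filter, mem_univ, true_and, mem_erase,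
    Finset.Nonempty]
  constructor
  · rintro ⟨r, h1, h2⟩
    exact ⟨h2, r, h1⟩
  · rintro ⟨h2, r, h1⟩
    exact ⟨r, h1, h2⟩

theorem card_le_involved (A : Finset (U × R)) :
    A.card ≤ (involved A).card * Fintype.card R := by
  rw [← Finset.card_univ (α := R), ← Finset.card_product]
  apply Finset.card_le_card
  rintro ⟨u, r⟩ h
  refine mem_product.mpr ⟨mem_filter.mpr ⟨mem_univ _, r, ?_⟩, mem_univ _⟩
  exact mem_filter.mpr ⟨mem_univ _, h⟩

theorem userCount_constraint_bound
    {ιs ιc : Type*} [Fintype ιs] [Fintype ιc]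
    (pSoD pCard : ℕ)
    -- SoD constraints, indexed by ιs, with scopes (rs i, rs' i)
    (rs rs' : ιs → R)
    -- Cardinality-Lower-Bound constraints, indexed by ιc, with scope rc j and bound ℓc j
    (rc : ιc → R) (ℓc : ιc → ℕ)
    (k : ℕ) (hk : k = Fintype.card R)
    -- the total constraint weight, including the user-count constraint
    (wC : Finset (U × R) → ℕ)
    (hwC : ∀ A, wC A = (∑ i, pSoD * ((ares A (rs i)) ∩ (ares A (rs' i))).card) +
      ((∑ j, pCard * (ℓc j - (ares A (rc j)).card)) + (involved A).card ^ 2)) :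
    (∀ A : Finset (U × R), Fintype.card ιc * pCard + 1 < 2 * (involved A).card →
      ∀ u : U, (ausr A u).Nonempty → wC (delUser A u) < wC A) ∧
    (∀ A : Finset (U × R), (∀ A' : Finset (U × R), wC A ≤ wC A') →
      2 * (involved A).card ≤ Fintype.card ιc * pCard + 1 ∧
        2 * A.card ≤ k * (Fintype.card ιc * pCard + 1)) := by
  have part1 : ∀ A : Finset (U × R),
      Fintype.card ιc * pCard + 1 < 2 * (involved A).card →
      ∀ u : U, (ausr A u).Nonempty → wC (delUser A u) < wC A := by
    intro A hA u hu
    have hmem : u ∈ involved A := by simpa [involved] using hu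
    have hcard : (involved (delUser A u)).card + 1 = (involved A).card := by
      rw [involved_delUser]
      exact Finset.card_erase_add_one hmem
    have h1 : (∑ i, pSoD * ((ares (delUser A u) (rs i)) ∩ (ares (delUser A u) (rs' i))).card)
        ≤ ∑ i, pSoD * ((ares A (rs i)) ∩ (ares A (rs' i))).card := by
      apply Finset.sum_le_sum
      intro i _
      apply Nat.mul_le_mul_left
      apply Finset.card_le_card
      rw [ares_delUser, ares_delUser]
      exact Finset.inter_subset_inter (Finset.erase_subset _ _) (Finset.erase_subset _ _)
    have h2 : (∑ j, pCard * (ℓc j - (ares (delUser A u) (rc j)).card))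
        ≤ (∑ j, pCard * (ℓc j - (ares A (rc j)).card)) + Fintype.card ιc * pCard := by
      have : Fintype.card ιc * pCard = ∑ _j : ιc, pCard := by simp
      rw [this, ← Finset.sum_add_distrib]
      apply Finset.sum_le_sum
      intro j _
      rw [ares_delUser, ← Nat.mul_succ]
      apply Nat.mul_le_mul_left
      have := Finset.pred_card_le_card_erase (s := ares A (rc j)) (a := u)
      omega
    rw [hwC, hwC]
    rw [← hcard] at hA ⊢
    nlinarith
  refine ⟨part1, ?_⟩
  intro A hmin
  have h : 2 * (involved A).card ≤ Fintype.card ιc * pCard + 1 := by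
    by_contra hcon
    push Not at hcon
    have hpos : 0 < (involved A).card := by omega
    obtain ⟨u, hu⟩ := Finset.card_pos.mp hpos
    have hu' : (ausr A u).Nonempty := by simpa [involved] using hu
    exact absurd (part1 A hcon u hu') (not_lt.mpr (hmin _))
  refine ⟨h, ?_⟩
  have h3 := card_le_involved A
  rw [hk]
  calc 2 * A.card ≤ Fintype.card R * (2 * (involved A).card) := by linarith
    _ ≤ _ := Nat.mul_le_mul_left _ h

end APEP
end
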